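/- arXiv:2403.08171 — 2 statements merged into one kernel-verified Lean document; each statement's English description precedes it below -/
import Mathlib

section
/- Let X ⊆ ℝ^d be a nonempty closed convex set, T ≥ 1, and let η_1 ≥ η_2 ≥ ⋯ ≥ η_T > 0 be non-increasing step sizes. For t = 1, …, T let ℓ^t : ℝ^d → ℝ be convex and differentiable. Define the optimistic gradient iterates: w^0 ∈ X, g^0 = 0, and for t = 1, …, T: x^t = Π_X[w^{t−1} − η_t g^{t−1}], g^t = ∇ℓ^t(x^t), w^t = Π_X[w^{t−1} − η_t g^t]. Let f : ℝ^d → ℝ be convex on X and suppose for each t = 1, …, T there is a proximal point p^t ∈ X of f at x^t over X. Set D = max_{0 ≤ t ≤ T−1} ‖w^t − p^{t+1}‖ and B_f = max_{1 ≤ t ≤ T} f(p^t) − min_{1 ≤ t ≤ T} f(p^t). Then ∑_{t=1}^T ⟨∇ℓ^t(x^t), x^t − p^t⟩ ≤ (D² + 2B_f − ‖w^T − p^T‖²)/(2η_T) + ∑_{t=1}^T η_t‖g^t − g^{t−1}‖² − ∑_{t=1}^T (1/(2η_t))‖x^t − w^t‖². -/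
open scoped InnerProductSpace

/-!
Two projections from the same centre `w (t - 1)` give the usual one-step bound for optimistic
gradient descent against the comparator `p t`, whose distance terms do not telescope since `p t`
moves. Strong convexity of the proximal objective at `x (t + 1)` controls that movement:
`‖w t - p (t + 1)‖² - ‖x (t + 1) - w t‖² + 2 f (p (t + 1)) ≤ ‖w t - p t‖² + 2 f (p t)`,
and the term `‖x (t + 1) - w t‖²` is exactly what the next step bound can afford. Adding `2 f (p t)`
to both distances therefore restores telescoping, up to summation by parts with the nondecreasing
weights `1 / (2 η t)`.
-/

open Filter Topology

theorem sum_mul_sub_le_of_shift_le {R : Type*} [CommRing R] [LinearOrder R] [IsStrictOrderedRing R]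
    {c u v : ℕ → R} {K : R} {n : ℕ} (hn : 1 ≤ n)
    (hc_nonneg : ∀ t ∈ Finset.Icc 1 n, 0 ≤ c t)
    (hc_mono : ∀ t ∈ Finset.Icc 1 (n - 1), c t ≤ c (t + 1))
    (huK : ∀ t ∈ Finset.Icc 1 n, u t ≤ K)
    (huv : ∀ t ∈ Finset.Icc 1 (n - 1), u (t + 1) ≤ v t) :
    ∑ t ∈ Finset.Icc 1 n, c t * (u t - v t) ≤ c n * (K - v n) := by
  suffices ∀ m, 1 ≤ m → m ≤ n → ∑ t ∈ Finset.Icc 1 m, c t * (u t - v t) ≤ c m * (K - v m) from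
    this n hn le_rfl
  intro m hm
  induction m, hm using Nat.le_induction with
  | base =>
    intro _
    have mem_one : 1 ∈ Finset.Icc 1 n := by simpa using hn
    have := hc_nonneg 1 mem_one
    have := huK 1 mem_one
    rw [Finset.Icc_self, Finset.sum_singleton]
    gcongr
  | succ m hm ih =>
    intro hmn
    have mem_m : m ∈ Finset.Icc 1 (n - 1) := by grind
    have hcm := hc_nonneg m (by grind)
    have gap_nonneg : 0 ≤ K - u (m + 1) := sub_nonneg.2 (huK (m + 1) (by grind))
    rw [Finset.sum_Icc_succ_top (by omega)]
    calc ∑ t ∈ Finset.Icc 1 m, c t * (u t - v t) + c (m + 1) * (u (m + 1) - v (m + 1))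
        ≤ c m * (K - v m) + c (m + 1) * (u (m + 1) - v (m + 1)) := by gcongr; exact ih (by omega)
      _ ≤ c m * (K - u (m + 1)) + c (m + 1) * (u (m + 1) - v (m + 1)) := by
        gcongr; exact huv m mem_m
      _ ≤ c (m + 1) * (K - u (m + 1)) + c (m + 1) * (u (m + 1) - v (m + 1)) := by
        gcongr; exact hc_mono m mem_m
      _ = c (m + 1) * (K - v (m + 1)) := by ring

theorem add_modulus_le_of_uniformConvexOn_of_isMinOn {E : Type*} [NormedAddCommGroup E]
    [NormedSpace ℝ E] {X : Set E} {φ : ℝ → ℝ} {f : E → ℝ} {u y : E}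
    (hf : UniformConvexOn X φ f) (hu : u ∈ X) (hmin : IsMinOn f X u) (hy : y ∈ X) :
    f u + φ ‖u - y‖ ≤ f y := by
  have segment_bound : ∀ s ∈ Set.Ioo (0 : ℝ) 1, f u + (1 - s) * φ ‖u - y‖ ≤ f y := by
    rintro s ⟨hs0, hs1⟩
    have hs : 0 ≤ 1 - s := by linarith
    have convex_bound := hf.2 hu hy hs hs0.le (by ring)
    have min_bound := isMinOn_iff.1 hmin _ (hf.1 hu hy hs hs0.le (by ring))
    simp only [smul_eq_mul] at convex_bound
    refine le_of_mul_le_mul_left ?_ hs0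
    linarith
  have tendsto_bound :
      Tendsto (fun s : ℝ ↦ f u + (1 - s) * φ ‖u - y‖) (𝓝[>] 0) (𝓝 (f u + φ ‖u - y‖)) := by
    have continuous_bound : Continuous fun s : ℝ ↦ f u + (1 - s) * φ ‖u - y‖ := by fun_prop
    simpa using (continuous_bound.tendsto 0).mono_left nhdsWithin_le_nhds
  refine le_of_tendsto tendsto_bound ?_
  filter_upwards [Ioo_mem_nhdsGT zero_lt_one] with s hs using segment_bound s hs

section InnerProductSpace

variable {E : Type*} [NormedAddCommGroup E] [InnerProductSpace ℝ E] {X : Set E}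

/-- `u` is a point of `X` nearest to `z`, i.e. `u = Π_X[z]` when `X` is convex. As a relation it
makes sense even where the projection onto `X` does not exist. -/
def IsNearestPoint (X : Set E) (z u : E) : Prop :=
  u ∈ X ∧ ∀ y ∈ X, ‖u - z‖ ≤ ‖y - z‖

/-- `u` is a proximal point of `f` at `z` over `X`, as a relation, so that no choice of minimizer
is involved. -/
def IsProxPoint (f : E → ℝ) (X : Set E) (z u : E) : Prop :=
  u ∈ X ∧ IsMinOn (fun y ↦ f y + (1 / 2) * ‖y - z‖ ^ 2) X u

namespace IsNearestPoint

theorem inner_sub_sub_nonpos {z u y : E} (hu : IsNearestPoint X z u) (hX : Convex ℝ X)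
    (hy : y ∈ X) : ⟪z - u, y - u⟫_ℝ ≤ 0 := by
  have : Nonempty X := ⟨⟨u, hu.1⟩⟩
  have norm_eq_iInf : ‖z - u‖ = ⨅ v : X, ‖z - v‖ := by
    refine le_antisymm (le_ciInf fun v ↦ ?_) (ciInf_le ⟨0, ?_⟩ (⟨u, hu.1⟩ : X))
    · simpa only [norm_sub_rev z] using hu.2 v v.2
    · rintro _ ⟨v, rfl⟩
      exact norm_nonneg _
  exact (norm_eq_iInf_iff_real_inner_le_zero hX hu.1).1 norm_eq_iInf y hy

theorem norm_sub_le_norm_sub {z z' u u' : E} (hu : IsNearestPoint X z u)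
    (hu' : IsNearestPoint X z' u') (hX : Convex ℝ X) : ‖u - u'‖ ≤ ‖z - z'‖ := by
  have angle := hu.inner_sub_sub_nonpos hX hu'.1
  have angle' := hu'.inner_sub_sub_nonpos hX hu.1
  have firmly_nonexpansive : ‖u - u'‖ * ‖u - u'‖ ≤ ‖z - z'‖ * ‖u - u'‖ :=
    calc ‖u - u'‖ * ‖u - u'‖
        = ⟪z - z', u - u'⟫_ℝ + ⟪z - u, u' - u⟫_ℝ + ⟪z' - u', u - u'⟫_ℝ := by
          rw [← real_inner_self_eq_norm_mul_norm]
          simp only [inner_sub_left, inner_sub_right]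
          ring
      _ ≤ ⟪z - z', u - u'⟫_ℝ := by linarith
      _ ≤ ‖z - z'‖ * ‖u - u'‖ := real_inner_le_norm _ _
  rcases (norm_nonneg (u - u')).eq_or_lt with h | h
  · rw [← h]
    exact norm_nonneg _
  · exact le_of_mul_le_mul_right firmly_nonexpansive h

theorem two_mul_inner_sub_le {w v u y : E} (hu : IsNearestPoint X (w - v) u) (hX : Convex ℝ X)
    (hy : y ∈ X) :
    2 * ⟪v, u - y⟫_ℝ ≤ ‖w - y‖ ^ 2 - ‖u - y‖ ^ 2 - ‖u - w‖ ^ 2 := by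
  have angle := hu.inner_sub_sub_nonpos hX hy
  have polarization :
      ‖w - y‖ ^ 2 - ‖u - y‖ ^ 2 - ‖u - w‖ ^ 2 - 2 * ⟪v, u - y⟫_ℝ
        = -2 * ⟪w - v - u, y - u⟫_ℝ := by
    simp only [← real_inner_self_eq_norm_sq, inner_sub_left, inner_sub_right,
      real_inner_comm]
    ring
  linarith

end IsNearestPoint

theorem two_mul_inner_le_of_optimistic_step {w₀ v v' x w p : E} (hX : Convex ℝ X)
    (hx : IsNearestPoint X (w₀ - v') x) (hw : IsNearestPoint X (w₀ - v) w) (hp : p ∈ X) :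
    2 * ⟪v, x - p⟫_ℝ ≤
      ‖w₀ - p‖ ^ 2 - ‖w - p‖ ^ 2 - ‖x - w₀‖ ^ 2 + 2 * ‖v - v'‖ ^ 2 - ‖x - w‖ ^ 2 := by
  have update_bound := hw.two_mul_inner_sub_le hX hp
  have prediction_bound := hx.two_mul_inner_sub_le hX hw.1
  have norm_sub_le : ‖x - w‖ ≤ ‖v - v'‖ := by
    simpa using hx.norm_sub_le_norm_sub hw hX
  have prediction_error : ⟪v - v', x - w⟫_ℝ ≤ ‖v - v'‖ ^ 2 :=
    calc ⟪v - v', x - w⟫_ℝ ≤ ‖v - v'‖ * ‖x - w‖ := real_inner_le_norm _ _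
      _ ≤ ‖v - v'‖ * ‖v - v'‖ := by gcongr
      _ = ‖v - v'‖ ^ 2 := (sq _).symm
  have split_inner :
      ⟪v, x - p⟫_ℝ = ⟪v, w - p⟫_ℝ + ⟪v', x - w⟫_ℝ + ⟪v - v', x - w⟫_ℝ := by
    simp only [inner_sub_left, inner_sub_right]
    ring
  rw [norm_sub_rev w₀ w] at prediction_bound
  linarith

theorem inner_le_of_optimistic_gradient_step {w₀ g g' x w p : E} {η : ℝ} (hη : 0 < η)
    (hX : Convex ℝ X) (hx : IsNearestPoint X (w₀ - η • g') x)
    (hw : IsNearestPoint X (w₀ - η • g) w) (hp : p ∈ X) :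
    ⟪g, x - p⟫_ℝ ≤ 1 / (2 * η) * (‖w₀ - p‖ ^ 2 - ‖w - p‖ ^ 2 - ‖x - w₀‖ ^ 2)
      + η * ‖g - g'‖ ^ 2 - 1 / (2 * η) * ‖x - w‖ ^ 2 := by
  have step := two_mul_inner_le_of_optimistic_step hX hx hw hp
  rw [← smul_sub, norm_smul, mul_pow, Real.norm_eq_abs, sq_abs, real_inner_smul_left] at step
  refine le_of_mul_le_mul_left ?_ (show 0 < 2 * η by positivity)
  calc 2 * η * ⟪g, x - p⟫_ℝ = 2 * (η * ⟪g, x - p⟫_ℝ) := by ring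
    _ ≤ _ := step
    _ = _ := by field_simp

theorem strongConvexOn_add_half_norm_sub_sq {f : E → ℝ} (hf : ConvexOn ℝ X f) (z : E) :
    StrongConvexOn X 1 fun y ↦ f y + (1 / 2) * ‖y - z‖ ^ 2 := by
  have convexOn_affine : ConvexOn ℝ X fun y ↦ f y + (innerₗ E (-z) y + (1 / 2) * ‖z‖ ^ 2) :=
    hf.add (((innerₗ E (-z)).convexOn hf.1).add_const _)
  rw [strongConvexOn_iff_convex]
  convert convexOn_affine using 2 with y
  rw [innerₗ_apply_apply, inner_neg_left, real_inner_comm, norm_sub_sq_real]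
  ring

namespace IsProxPoint

theorem three_point_le {f : E → ℝ} {z u y : E} (hu : IsProxPoint f X z u) (hf : ConvexOn ℝ X f)
    (hy : y ∈ X) :
    f u + (1 / 2) * ‖u - z‖ ^ 2 + (1 / 2) * ‖u - y‖ ^ 2 ≤ f y + (1 / 2) * ‖y - z‖ ^ 2 :=
  add_modulus_le_of_uniformConvexOn_of_isMinOn (strongConvexOn_add_half_norm_sub_sq hf z)
    hu.1 hu.2 hy

theorem norm_sub_sq_sub_add_le {f : E → ℝ} {x p' p : E} (hp' : IsProxPoint f X x p')
    (hf : ConvexOn ℝ X f) (hp : p ∈ X) (w : E) :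
    ‖w - p'‖ ^ 2 - ‖x - w‖ ^ 2 + 2 * f p' ≤ ‖w - p‖ ^ 2 + 2 * f p := by
  have three_point := hp'.three_point_le hf hp
  have completed_square :
      ‖w - p‖ ^ 2 + ‖x - w‖ ^ 2 - ‖w - p'‖ ^ 2 + ‖p' - x‖ ^ 2 + ‖p' - p‖ ^ 2 - ‖p - x‖ ^ 2
        = ‖w - x - (p - p')‖ ^ 2 := by
    simp only [← real_inner_self_eq_norm_sq, inner_sub_left, inner_sub_right,
      real_inner_comm]
    ring
  have square_nonneg := sq_nonneg ‖w - x - (p - p')‖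
  linarith

end IsProxPoint

theorem sum_norm_sub_sq_drift_le_of_isProxPoint {T : ℕ} (hT : 1 ≤ T) {η : ℕ → ℝ}
    (hη_pos : ∀ t ∈ Finset.Icc 1 T, 0 < η t)
    (hη_anti : ∀ t ∈ Finset.Icc 1 (T - 1), η (t + 1) ≤ η t)
    {f : E → ℝ} (hf : ConvexOn ℝ X f) {w x p : ℕ → E}
    (hp : ∀ t ∈ Finset.Icc 1 T, IsProxPoint f X (x t) (p t))
    {D B : ℝ} (hD : ∀ t ∈ Finset.range T, ‖w t - p (t + 1)‖ ≤ D)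
    (hB : ∀ t ∈ Finset.Icc 1 T, f (p t) - f (p T) ≤ B) :
    ∑ t ∈ Finset.Icc 1 T, 1 / (2 * η t) *
        (‖w (t - 1) - p t‖ ^ 2 - ‖w t - p t‖ ^ 2 - ‖x t - w (t - 1)‖ ^ 2)
      ≤ (D ^ 2 + 2 * B - ‖w T - p T‖ ^ 2) / (2 * η T) := by
  let u (t : ℕ) : ℝ := ‖w (t - 1) - p t‖ ^ 2 - ‖x t - w (t - 1)‖ ^ 2 + 2 * f (p t)
  let v (t : ℕ) : ℝ := ‖w t - p t‖ ^ 2 + 2 * f (p t)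
  let K : ℝ := D ^ 2 + 2 * (f (p T) + B)
  have weight_nonneg : ∀ t ∈ Finset.Icc 1 T, 0 ≤ 1 / (2 * η t) := fun t ht ↦ by
    have := hη_pos t ht
    positivity
  have weight_mono : ∀ t ∈ Finset.Icc 1 (T - 1), 1 / (2 * η t) ≤ 1 / (2 * η (t + 1)) :=
    fun t ht ↦ by
      have := hη_pos (t + 1) (by grind)
      have := hη_anti t ht
      gcongr
  have u_le : ∀ t ∈ Finset.Icc 1 T, u t ≤ K := fun t ht ↦ by
    have dist_le : ‖w (t - 1) - p t‖ ^ 2 ≤ D ^ 2 := by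
      have := hD (t - 1) (by grind)
      rw [Nat.sub_add_cancel (Finset.mem_Icc.1 ht).1] at this
      gcongr
    linarith [hB t ht, sq_nonneg ‖x t - w (t - 1)‖]
  have u_succ_le : ∀ t ∈ Finset.Icc 1 (T - 1), u (t + 1) ≤ v t := fun t ht ↦
    (hp (t + 1) (by grind)).norm_sub_sq_sub_add_le hf (hp t (by grind)).1 (w t)
  calc ∑ t ∈ Finset.Icc 1 T, 1 / (2 * η t) *
          (‖w (t - 1) - p t‖ ^ 2 - ‖w t - p t‖ ^ 2 - ‖x t - w (t - 1)‖ ^ 2)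
      = ∑ t ∈ Finset.Icc 1 T, 1 / (2 * η t) * (u t - v t) :=
        Finset.sum_congr rfl fun t _ ↦ by ring
    _ ≤ 1 / (2 * η T) * (K - v T) :=
        sum_mul_sub_le_of_shift_le hT weight_nonneg weight_mono u_le u_succ_le
    _ = (D ^ 2 + 2 * B - ‖w T - p T‖ ^ 2) / (2 * η T) := by ring

theorem stmt_6_general {T : ℕ} (hT : 1 ≤ T) {η : ℕ → ℝ}
    (hη_pos : ∀ t ∈ Finset.Icc 1 T, 0 < η t)
    (hη_anti : ∀ t ∈ Finset.Icc 1 (T - 1), η (t + 1) ≤ η t)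
    {w x g : ℕ → E}
    (hx : ∀ t ∈ Finset.Icc 1 T, IsNearestPoint X (w (t - 1) - η t • g (t - 1)) (x t))
    (hw : ∀ t ∈ Finset.Icc 1 T, IsNearestPoint X (w (t - 1) - η t • g t) (w t))
    {f : E → ℝ} (hf : ConvexOn ℝ X f)
    {p : ℕ → E} (hp : ∀ t ∈ Finset.Icc 1 T, IsProxPoint f X (x t) (p t))
    {D B : ℝ} (hD : ∀ t ∈ Finset.range T, ‖w t - p (t + 1)‖ ≤ D)
    (hB : ∀ t ∈ Finset.Icc 1 T, f (p t) - f (p T) ≤ B) :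
    ∑ t ∈ Finset.Icc 1 T, ⟪g t, x t - p t⟫_ℝ
      ≤ (D ^ 2 + 2 * B - ‖w T - p T‖ ^ 2) / (2 * η T)
        + ∑ t ∈ Finset.Icc 1 T, η t * ‖g t - g (t - 1)‖ ^ 2
        - ∑ t ∈ Finset.Icc 1 T, 1 / (2 * η t) * ‖x t - w t‖ ^ 2 := by
  have drift_le := sum_norm_sub_sq_drift_le_of_isProxPoint hT hη_pos hη_anti hf hp hD hB
  refine le_trans ?_ (sub_le_sub_right (add_le_add_left drift_le _) _)
  rw [← Finset.sum_add_distrib, ← Finset.sum_sub_distrib]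
  exact Finset.sum_le_sum fun t ht ↦ inner_le_of_optimistic_gradient_step
    (hη_pos t ht) hf.1 (hx t ht) (hw t ht) (hp t ht).1

end InnerProductSpace

/-- Optimistic gradient descent with non-increasing step sizes over a nonempty
closed convex set `X ⊆ ℝ^d`, against convex differentiable losses `ℓ^t` (with gradient maps
`g t`): `x t = Π_X (w (t−1) − η t • gv (t−1))`, `gv t = g t (x t)`, `w t = Π_X (w (t−1) − η t • gv t)`,
with `gv 0 = 0` and `w 0 ∈ X`. For any `f` convex on `X`, with proximal points `p t` of `f` at
`x t` over `X`, `D = max_{0≤t≤T−1} ‖w t − p (t+1)‖` and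
`B_f = max_{1≤t≤T} f (p t) − min_{1≤t≤T} f (p t)`, the stated proximal regret bound holds. -/
theorem stmt_6 {d : ℕ} {X : Set (EuclideanSpace ℝ (Fin d))}
    (hXne : X.Nonempty) (hXclosed : IsClosed X) (hXconv : Convex ℝ X)
    {T : ℕ} (hT : 1 ≤ T)
    {η : ℕ → ℝ} (hηpos : ∀ t ∈ Finset.Icc 1 T, 0 < η t)
    (hηmono : ∀ t ∈ Finset.Icc 1 (T - 1), η (t + 1) ≤ η t)
    {ℓ : ℕ → EuclideanSpace ℝ (Fin d) → ℝ}
    {g : ℕ → EuclideanSpace ℝ (Fin d) → EuclideanSpace ℝ (Fin d)}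
    (hconv : ∀ t ∈ Finset.Icc 1 T, ConvexOn ℝ Set.univ (ℓ t))
    (hgrad : ∀ t ∈ Finset.Icc 1 T, ∀ a, HasGradientAt (ℓ t) (g t a) a)
    (proj : EuclideanSpace ℝ (Fin d) → EuclideanSpace ℝ (Fin d))
    (hproj : ∀ z, proj z ∈ X ∧ ∀ y ∈ X, ‖proj z - z‖ ≤ ‖y - z‖)
    {w x gv : ℕ → EuclideanSpace ℝ (Fin d)}
    (hw0 : w 0 ∈ X) (hgv0 : gv 0 = 0)
    (hxstep : ∀ t ∈ Finset.Icc 1 T, x t = proj (w (t - 1) - η t • gv (t - 1)))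
    (hgvdef : ∀ t ∈ Finset.Icc 1 T, gv t = g t (x t))
    (hwstep : ∀ t ∈ Finset.Icc 1 T, w t = proj (w (t - 1) - η t • gv t))
    {f : EuclideanSpace ℝ (Fin d) → ℝ} (hf : ConvexOn ℝ X f)
    {p : ℕ → EuclideanSpace ℝ (Fin d)} (hpX : ∀ t ∈ Finset.Icc 1 T, p t ∈ X)
    (hpmin : ∀ t ∈ Finset.Icc 1 T,
      IsMinOn (fun y => f y + (1 / 2) * ‖y - x t‖ ^ 2) X (p t))
    {D Bf : ℝ}
    (hD : D = (Finset.range T).sup' (Finset.nonempty_range_iff.mpr (by omega))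
      fun t => ‖w t - p (t + 1)‖)
    (hBf : Bf = ((Finset.Icc 1 T).sup' (Finset.nonempty_Icc.mpr hT) fun t => f (p t))
      - (Finset.Icc 1 T).inf' (Finset.nonempty_Icc.mpr hT) fun t => f (p t)) :
    ∑ t ∈ Finset.Icc 1 T, ⟪g t (x t), x t - p t⟫_ℝ
      ≤ (D ^ 2 + 2 * Bf - ‖w T - p T‖ ^ 2) / (2 * η T)
        + ∑ t ∈ Finset.Icc 1 T, η t * ‖gv t - gv (t - 1)‖ ^ 2
        - ∑ t ∈ Finset.Icc 1 T, 1 / (2 * η t) * ‖x t - w t‖ ^ 2 := by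
  rw [Finset.sum_congr rfl fun t ht ↦ by rw [← hgvdef t ht]]
  exact stmt_6_general hT hηpos hηmono (fun t ht ↦ hxstep t ht ▸ hproj _)
    (fun t ht ↦ hwstep t ht ▸ hproj _) hf (fun t ht ↦ ⟨hpX t ht, hpmin t ht⟩)
    (fun t ht ↦ hD ▸ Finset.le_sup' (fun t ↦ ‖w t - p (t + 1)‖) ht)
    (fun t ht ↦ hBf ▸ sub_le_sub (Finset.le_sup' (fun t ↦ f (p t)) ht)
      (Finset.inf'_le (fun t ↦ f (p t)) (Finset.right_mem_Icc.2 hT)))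
end

section
/- Let G be a simple graph on d ≥ 3 vertices with adjacency matrix A and clique number ω(G), let X = {x ∈ ℝ^d : x_i ≥ 0 for all i and ∑_i x_i ≤ 1}, and for an integer k with 1 ≤ k ≤ d define f_k(x) = xᵀAx − (1 − 1/k)(∑_i x_i)². Fix δ ∈ (0,1] and an integer k with ω(G) + 1 ≤ k ≤ d, and define φ(x) = (1 − δ/(12d³‖x‖₁))·x for x with ‖x‖₁ > 0. Then for every x ∈ X with ‖x‖₁ ≥ δ/(12d³), one has φ(x) ∈ X, ‖φ(x) − x‖₂ ≤ δ, and f_k(φ(x)) − f_k(x) > δ²/(144d⁸). -/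
/-- The feasible set `X = {x ∈ ℝ^d : x_i ≥ 0 ∀i, ∑_i x_i ≤ 1}`. -/
def stdCorner (d : ℕ) : Set (EuclideanSpace ℝ (Fin d)) :=
  {x | (∀ i, 0 ≤ x i) ∧ ∑ i, x i ≤ 1}

/-- The function `f_k(x) = xᵀ A x − (1 − 1/k)(∑_i x_i)²`, where `A` is the adjacency
matrix of the graph `G`. -/
noncomputable def fkFun {d : ℕ} (G : SimpleGraph (Fin d)) [DecidableRel G.Adj] (k : ℕ)
    (x : EuclideanSpace ℝ (Fin d)) : ℝ :=
  (∑ i, ∑ j, SimpleGraph.adjMatrix ℝ G i j * x i * x j)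
    - (1 - 1 / (k : ℝ)) * (∑ i, x i) ^ 2

/-!
By Motzkin–Straus, `xᵀAx ≤ (1 - 1/ω) (∑ xᵢ)²` for nonnegative `x`: if two vertices of the support of
`x` are not adjacent, moving the weight of one onto the other changes `xᵀAx` linearly, so one of the
two directions does not decrease it, and repeating this makes the support a clique, where the bound
is Cauchy–Schwarz. Hence `f_k(x) ≤ -(1/ω - 1/k) (∑ xᵢ)²`, and `1/ω - 1/k ≥ 1/(ω(ω+1)) > 1/d²` since
`ω` is less than both `k` and `d`. As `f_k` is homogeneous of degree two and negative, pulling `x`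
towards the origin by the fraction `r` gains `(1 - (1 - r)²)(-f_k(x)) ≥ -r² f_k(x)`; for
`r = ε / ‖x‖₁` with `ε = δ/(12d³)` this exceeds `ε²/d²`.
-/

open Finset Function Matrix

theorem dotProduct_mulVec_add_smul {V R : Type*} [Fintype V] [CommRing R] {A : Matrix V V R}
    (hA : A.IsSymm) (x v : V → R) (t : R) :
    (x + t • v) ⬝ᵥ A *ᵥ (x + t • v) =
      x ⬝ᵥ A *ᵥ x + 2 * t * (v ⬝ᵥ A *ᵥ x) + t ^ 2 * (v ⬝ᵥ A *ᵥ v) := by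
  have hswap : x ⬝ᵥ A *ᵥ v = v ⬝ᵥ A *ᵥ x := by
    simpa only [hA.eq] using dotProduct_transpose_mulVec A x v
  simp only [mulVec_add, mulVec_smul, add_dotProduct, dotProduct_add, smul_dotProduct,
    dotProduct_smul, smul_eq_mul, hswap]
  ring

section MoveWeight

variable {V R : Type*} [DecidableEq V]

/-- The weight vector obtained from `x` by moving the whole weight of `j` onto `i`, the basic step
of Zykov symmetrization. It is written as a displacement of `x` so that quadratic forms expand. -/
def moveWeight [Ring R] (x : V → R) (i j : V) : V → R :=
  x + x j • (Pi.single i 1 - Pi.single j 1)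

section Ring

variable [Ring R] {x : V → R} {i j : V}

theorem moveWeight_apply_source (hij : i ≠ j) : moveWeight x i j j = 0 := by
  simp [moveWeight, hij.symm]

theorem moveWeight_apply_target (hij : i ≠ j) : moveWeight x i j i = x i + x j := by
  simp [moveWeight, hij]

theorem moveWeight_apply_of_ne {l : V} (hi : l ≠ i) (hj : l ≠ j) : moveWeight x i j l = x l := by
  simp [moveWeight, hi, hj]

theorem sum_moveWeight [Fintype V] : ∑ l, moveWeight x i j l = ∑ l, x l := by
  simp [moveWeight, sum_add_distrib, ← mul_sum]

theorem support_moveWeight_ssubset (hij : i ≠ j) (hi : x i ≠ 0) (hj : x j ≠ 0) :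
    support (moveWeight x i j) ⊂ support x := by
  refine (Set.ssubset_iff_of_subset fun l hl => ?_).2
    ⟨j, hj, notMem_support.2 (moveWeight_apply_source hij)⟩
  rcases eq_or_ne l i with rfl | hli
  · exact hi
  rcases eq_or_ne l j with rfl | hlj
  · exact hj
  rwa [mem_support, moveWeight_apply_of_ne hli hlj] at hl

theorem moveWeight_nonneg [PartialOrder R] [IsOrderedAddMonoid R] (hx : 0 ≤ x) (hij : i ≠ j) :
    0 ≤ moveWeight x i j := by
  intro l
  rcases eq_or_ne l i with rfl | hli
  · exact (add_nonneg (hx l) (hx j)).trans_eq (moveWeight_apply_target hij).symm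
  rcases eq_or_ne l j with rfl | hlj
  · exact (moveWeight_apply_source hij).ge
  · exact (hx l).trans_eq (moveWeight_apply_of_ne hli hlj).symm

end Ring

theorem dotProduct_adjMatrix_mulVec_moveWeight [Fintype V] [CommRing R] (G : SimpleGraph V)
    [DecidableRel G.Adj] {i j : V} (hij : ¬ G.Adj i j) (x : V → R) :
    moveWeight x i j ⬝ᵥ G.adjMatrix R *ᵥ moveWeight x i j = x ⬝ᵥ G.adjMatrix R *ᵥ x +
      2 * x j * ((G.adjMatrix R *ᵥ x) i - (G.adjMatrix R *ᵥ x) j) := by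
  set v : V → R := Pi.single i 1 - Pi.single j 1 with hv
  have hvv : v ⬝ᵥ G.adjMatrix R *ᵥ v = 0 := by
    simp [hv, mulVec_sub, sub_dotProduct, hij, mt G.adj_symm hij]
  have hvx : v ⬝ᵥ G.adjMatrix R *ᵥ x = (G.adjMatrix R *ᵥ x) i - (G.adjMatrix R *ᵥ x) j := by
    rw [hv, sub_dotProduct, single_one_dotProduct, single_one_dotProduct]
  rw [moveWeight, ← hv, dotProduct_mulVec_add_smul G.isSymm_adjMatrix, hvv, hvx, mul_zero, add_zero]

end MoveWeight

section MotzkinStraus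

variable {V R : Type*} [Fintype V] {G : SimpleGraph V}

theorem dotProduct_adjMatrix_mulVec_of_isClique_support [DecidableRel G.Adj] [CommRing R]
    {x : V → R} (hclique : G.IsClique (support x)) :
    x ⬝ᵥ G.adjMatrix R *ᵥ x = (∑ i, x i) ^ 2 - ∑ i, x i ^ 2 := by
  classical
  have hentry (i j : V) :
      x i * (G.adjMatrix R i j * x j) = x i * x j - if i = j then x i ^ 2 else 0 := by
    rcases eq_or_ne i j with rfl | hij
    · simp [sq]
    by_cases hi : x i = 0
    · simp [hi, hij]
    by_cases hj : x j = 0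
    · simp [hj, hij]
    · simp [hclique hi hj hij, hij]
  simp only [dotProduct, mulVec, mul_sum, hentry, sum_sub_distrib, sum_ite_eq, mem_univ, if_true]
  rw [sq (∑ i, x i), sum_mul_sum]

theorem sq_sum_le_cliqueNum_mul_sum_sq [CommRing R] [LinearOrder R]
    [IsStrictOrderedRing R] {x : V → R} (hclique : G.IsClique (support x)) :
    (∑ i, x i) ^ 2 ≤ G.cliqueNum * ∑ i, x i ^ 2 := by
  classical
  let T : Finset V := {i | x i ≠ 0}
  have hT : G.IsClique (T : Set V) := by
    simpa [T, support] using hclique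
  calc (∑ i, x i) ^ 2 = (∑ i ∈ T, x i) ^ 2 := by rw [sum_filter_ne_zero]
    _ ≤ #T * ∑ i ∈ T, x i ^ 2 := sq_sum_le_card_mul_sum_sq
    _ ≤ G.cliqueNum * ∑ i, x i ^ 2 := by
      gcongr
      · exact SimpleGraph.IsClique.card_le_cliqueNum (tc := hT)
      · exact subset_univ T

variable (G) [DecidableRel G.Adj]

section OrderedRing

variable [CommRing R] [LinearOrder R] [IsStrictOrderedRing R] {x : V → R}

theorem exists_support_ssubset_of_not_isClique_support (hx : 0 ≤ x)
    (hclique : ¬ G.IsClique (support x)) :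
    ∃ y : V → R, 0 ≤ y ∧ ∑ i, y i = ∑ i, x i ∧ support y ⊂ support x ∧
      x ⬝ᵥ G.adjMatrix R *ᵥ x ≤ y ⬝ᵥ G.adjMatrix R *ᵥ y := by
  classical
  simp only [SimpleGraph.isClique_iff, Set.Pairwise, not_forall] at hclique
  obtain ⟨i, hi, j, hj, hij, hadj⟩ := hclique
  wlog hle : (G.adjMatrix R *ᵥ x) j ≤ (G.adjMatrix R *ᵥ x) i generalizing i j
  · exact this j hj i hi hij.symm (mt G.adj_symm hadj) (le_of_not_ge hle)
  refine ⟨moveWeight x i j, moveWeight_nonneg hx hij, sum_moveWeight,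
    support_moveWeight_ssubset hij hi hj, ?_⟩
  rw [dotProduct_adjMatrix_mulVec_moveWeight G hadj]
  exact le_add_of_nonneg_right
    (mul_nonneg (mul_nonneg zero_le_two (hx j)) (sub_nonneg.2 hle))

theorem exists_isClique_support_dotProduct_adjMatrix_mulVec_le (hx : 0 ≤ x) :
    ∃ y : V → R, ∑ i, y i = ∑ i, x i ∧ G.IsClique (support y) ∧
      x ⬝ᵥ G.adjMatrix R *ᵥ x ≤ y ⬝ᵥ G.adjMatrix R *ᵥ y := by
  induction hn : (support x).ncard using Nat.strong_induction_on generalizing x with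
  | _ n ih =>
    by_cases hclique : G.IsClique (support x)
    · exact ⟨x, rfl, hclique, le_rfl⟩
    obtain ⟨y, hy, hsum, hssub, hle⟩ := exists_support_ssubset_of_not_isClique_support G hx hclique
    obtain ⟨z, hzsum, hzclique, hyz⟩ := ih _ (hn ▸ Set.ncard_lt_ncard hssub) hy rfl
    exact ⟨z, hzsum.trans hsum, hzclique, hle.trans hyz⟩

end OrderedRing

theorem motzkin_straus {K : Type*} [Field K] [LinearOrder K] [IsStrictOrderedRing K]
    {x : V → K} (hx : 0 ≤ x) :
    x ⬝ᵥ G.adjMatrix K *ᵥ x ≤ (1 - 1 / (G.cliqueNum : K)) * (∑ i, x i) ^ 2 := by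
  obtain ⟨y, hsum, hclique, hle⟩ := exists_isClique_support_dotProduct_adjMatrix_mulVec_le G hx
  have hcs : (∑ i, y i) ^ 2 / G.cliqueNum ≤ ∑ i, y i ^ 2 :=
    div_le_of_le_mul₀ (Nat.cast_nonneg _) (sum_nonneg fun i _ => sq_nonneg (y i))
      (mul_comm (G.cliqueNum : K) _ ▸ sq_sum_le_cliqueNum_mul_sum_sq hclique)
  calc x ⬝ᵥ G.adjMatrix K *ᵥ x ≤ y ⬝ᵥ G.adjMatrix K *ᵥ y := hle
    _ = (∑ i, y i) ^ 2 - ∑ i, y i ^ 2 := dotProduct_adjMatrix_mulVec_of_isClique_support hclique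
    _ ≤ (∑ i, y i) ^ 2 - (∑ i, y i) ^ 2 / G.cliqueNum := by gcongr
    _ = (1 - 1 / (G.cliqueNum : K)) * (∑ i, x i) ^ 2 := by rw [hsum]; ring

end MotzkinStraus

theorem cliqueNum_pos {V : Type*} [Finite V] [Nonempty V] (G : SimpleGraph V) :
    0 < G.cliqueNum := by
  obtain ⟨v⟩ := ‹Nonempty V›
  have hv : G.IsClique (({v} : Finset V) : Set V) := by simp
  exact (card_pos.2 (singleton_nonempty v)).trans_le
    (SimpleGraph.IsClique.card_le_cliqueNum (tc := hv))

theorem one_div_sq_lt_one_div_sub_one_div {K : Type*} [Field K] [LinearOrder K]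
    [IsStrictOrderedRing K] {w k d : ℕ} (hw : 0 < w) (hwk : w < k) (hwd : w < d) :
    1 / (d : K) ^ 2 < 1 / (w : K) - 1 / (k : K) := by
  have hw' : (0 : K) < w := by exact_mod_cast hw
  have hwk' : (w : K) + 1 ≤ k := by exact_mod_cast hwk
  have hwd' : (w : K) + 1 ≤ d := by exact_mod_cast hwd
  calc 1 / (d : K) ^ 2 ≤ 1 / ((w : K) + 1) ^ 2 := by gcongr
    _ < 1 / ((w : K) * (w + 1)) := by gcongr; nlinarith
    _ = 1 / (w : K) - 1 / (w + 1) := by field_simp; ring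
    _ ≤ 1 / (w : K) - 1 / k := by gcongr

theorem euclideanSpace_norm_le_sum_of_nonneg {ι : Type*} [Fintype ι] {x : EuclideanSpace ℝ ι}
    (hx : ∀ i, 0 ≤ x i) : ‖x‖ ≤ ∑ i, x i := by
  rw [EuclideanSpace.norm_eq]
  refine Real.sqrt_le_iff.2 ⟨sum_nonneg fun i _ => hx i, ?_⟩
  simpa only [Real.norm_eq_abs, sq_abs] using sum_sq_le_sq_sum_of_nonneg fun i _ => hx i

theorem norm_one_sub_div_sum_smul_sub_le {ι : Type*} [Fintype ι] {x : EuclideanSpace ℝ ι} {ε : ℝ}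
    (hε : 0 ≤ ε) (hx : ∀ i, 0 ≤ x i) : ‖(1 - ε / ∑ i, x i) • x - x‖ ≤ ε := by
  have hs : 0 ≤ ∑ i, x i := sum_nonneg fun i _ => hx i
  calc ‖(1 - ε / ∑ i, x i) • x - x‖ = ‖-(ε / ∑ i, x i) • x‖ := by congr 1; module
    _ = ε / (∑ i, x i) * ‖x‖ := by
      rw [norm_smul, norm_neg, Real.norm_of_nonneg (div_nonneg hε hs)]
    _ ≤ ε / (∑ i, x i) * ∑ i, x i := by gcongr; exact euclideanSpace_norm_le_sum_of_nonneg hx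
    _ ≤ ε := mul_le_of_le_div₀ hε hs le_rfl

section Shrink

variable {d : ℕ} {x : EuclideanSpace ℝ (Fin d)}

theorem smul_mem_stdCorner {c : ℝ} (hc₀ : 0 ≤ c) (hc₁ : c ≤ 1) (hx : x ∈ stdCorner d) :
    c • x ∈ stdCorner d := by
  refine ⟨fun i => mul_nonneg hc₀ (hx.1 i), ?_⟩
  simp only [PiLp.smul_apply, smul_eq_mul, ← mul_sum]
  exact mul_le_one₀ hc₁ (sum_nonneg fun i _ => hx.1 i) hx.2

variable (G : SimpleGraph (Fin d)) [DecidableRel G.Adj] (k : ℕ)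

theorem fkFun_eq_dotProduct_mulVec (x : EuclideanSpace ℝ (Fin d)) :
    fkFun G k x = x.ofLp ⬝ᵥ G.adjMatrix ℝ *ᵥ x.ofLp - (1 - 1 / (k : ℝ)) * (∑ i, x i) ^ 2 := by
  simp only [fkFun, dotProduct, mulVec, mul_sum, mul_left_comm, mul_assoc]

theorem fkFun_smul (c : ℝ) (x : EuclideanSpace ℝ (Fin d)) :
    fkFun G k (c • x) = c ^ 2 * fkFun G k x := by
  simp only [fkFun_eq_dotProduct_mulVec, WithLp.ofLp_smul, PiLp.smul_apply, mulVec_smul,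
    smul_dotProduct, dotProduct_smul, smul_eq_mul, ← mul_sum]
  ring

theorem fkFun_le_of_nonneg (hx : ∀ i, 0 ≤ x i) :
    fkFun G k x ≤ -((1 / (G.cliqueNum : ℝ) - 1 / k) * (∑ i, x i) ^ 2) := by
  rw [fkFun_eq_dotProduct_mulVec]
  linarith [motzkin_straus G (x := x.ofLp) hx]

variable {G k}

theorem sq_sum_div_sq_lt_neg_fkFun (hGd : G.cliqueNum < d) (hGk : G.cliqueNum < k)
    (hx : ∀ i, 0 ≤ x i) (hs : 0 < ∑ i, x i) :
    (∑ i, x i) ^ 2 / (d : ℝ) ^ 2 < -fkFun G k x := by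
  have : Nonempty (Fin d) := ⟨⟨0, Nat.zero_lt_of_lt hGd⟩⟩
  calc (∑ i, x i) ^ 2 / (d : ℝ) ^ 2 = 1 / (d : ℝ) ^ 2 * (∑ i, x i) ^ 2 := by ring
    _ < (1 / (G.cliqueNum : ℝ) - 1 / k) * (∑ i, x i) ^ 2 := by
      gcongr
      exact one_div_sq_lt_one_div_sub_one_div (cliqueNum_pos G) hGk hGd
    _ ≤ -fkFun G k x := le_neg_of_le_neg (fkFun_le_of_nonneg G k hx)

theorem sq_mul_neg_fkFun_le_fkFun_one_sub_smul_sub {r : ℝ} (hr₀ : 0 ≤ r) (hr₁ : r ≤ 1)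
    (hf : fkFun G k x ≤ 0) :
    r ^ 2 * -fkFun G k x ≤ fkFun G k ((1 - r) • x) - fkFun G k x := by
  have hcoeff : r ^ 2 ≤ 1 - (1 - r) ^ 2 := by nlinarith
  calc r ^ 2 * -fkFun G k x ≤ (1 - (1 - r) ^ 2) * -fkFun G k x :=
      mul_le_mul_of_nonneg_right hcoeff (neg_nonneg.2 hf)
    _ = fkFun G k ((1 - r) • x) - fkFun G k x := by rw [fkFun_smul]; ring

theorem sq_div_sq_lt_fkFun_one_sub_div_sum_smul_sub {ε : ℝ} (hGd : G.cliqueNum < d)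
    (hGk : G.cliqueNum < k) (hx : ∀ i, 0 ≤ x i) (hε : 0 < ε) (hεx : ε ≤ ∑ i, x i) :
    ε ^ 2 / (d : ℝ) ^ 2 < fkFun G k ((1 - ε / ∑ i, x i) • x) - fkFun G k x := by
  have hs : 0 < ∑ i, x i := hε.trans_le hεx
  have hf := sq_sum_div_sq_lt_neg_fkFun hGd hGk hx hs
  have hf₀ : fkFun G k x ≤ 0 := neg_nonneg.1 ((by positivity : (0 : ℝ) ≤ _).trans hf.le)
  calc ε ^ 2 / (d : ℝ) ^ 2 = (ε / ∑ i, x i) ^ 2 * ((∑ i, x i) ^ 2 / (d : ℝ) ^ 2) := by field_simp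
    _ < (ε / ∑ i, x i) ^ 2 * -fkFun G k x := by gcongr
    _ ≤ fkFun G k ((1 - ε / ∑ i, x i) • x) - fkFun G k x :=
      sq_mul_neg_fkFun_le_fkFun_one_sub_smul_sub (by positivity) ((div_le_one hs).2 hεx) hf₀

end Shrink

theorem stmt_16_general {d : ℕ} (G : SimpleGraph (Fin d)) [DecidableRel G.Adj]
    {δ : ℝ} (hδ : 0 < δ) {k : ℕ} (hGd : G.cliqueNum < d) (hGk : G.cliqueNum < k)
    {x : EuclideanSpace ℝ (Fin d)} (hx : x ∈ stdCorner d)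
    (hδx : δ / (12 * (d : ℝ) ^ 3) ≤ ∑ i, x i) :
    (1 - δ / (12 * (d : ℝ) ^ 3 * ∑ i, x i)) • x ∈ stdCorner d ∧
    ‖(1 - δ / (12 * (d : ℝ) ^ 3 * ∑ i, x i)) • x - x‖ ≤ δ ∧
    δ ^ 2 / (144 * (d : ℝ) ^ 8)
      < fkFun G k ((1 - δ / (12 * (d : ℝ) ^ 3 * ∑ i, x i)) • x) - fkFun G k x := by
  have hd : (1 : ℝ) ≤ d := by exact_mod_cast Nat.zero_lt_of_lt hGd
  have hεδ : δ / (12 * (d : ℝ) ^ 3) ≤ δ :=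
    div_le_self hδ.le (by linarith [one_le_pow₀ hd (n := 3)])
  have hgain : δ ^ 2 / (144 * (d : ℝ) ^ 8) = (δ / (12 * (d : ℝ) ^ 3)) ^ 2 / (d : ℝ) ^ 2 := by
    field_simp
    norm_num
  rw [← div_div, hgain]
  have hε : 0 < δ / (12 * (d : ℝ) ^ 3) := by positivity
  have hs : 0 < ∑ i, x i := hε.trans_le hδx
  exact ⟨smul_mem_stdCorner (sub_nonneg.2 ((div_le_one hs).2 hδx))
      (sub_le_self 1 (div_nonneg hε.le hs.le)) hx,
    (norm_one_sub_div_sum_smul_sub_le hε.le hx.1).trans hεδ,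
    sq_div_sq_lt_fkFun_one_sub_div_sum_smul_sub hGd hGk hx.1 hε hδx⟩

/-- Fix `δ ∈ (0,1]` and an integer `k` with `ω(G) + 1 ≤ k ≤ d`, and
let `φ(x) = (1 − δ/(12d³‖x‖₁))·x`. Then for every `x ∈ X` with `‖x‖₁ ≥ δ/(12d³)`,
one has `φ(x) ∈ X`, `‖φ(x) − x‖₂ ≤ δ`, and `f_k(φ(x)) − f_k(x) > δ²/(144d⁸)`. -/
theorem stmt_16 {d : ℕ} (hd : 3 ≤ d) (G : SimpleGraph (Fin d)) [DecidableRel G.Adj]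
    {δ : ℝ} (hδ0 : 0 < δ) (hδ1 : δ ≤ 1)
    {k : ℕ} (hk : G.cliqueNum + 1 ≤ k) (hkd : k ≤ d)
    {x : EuclideanSpace ℝ (Fin d)} (hx : x ∈ stdCorner d)
    (hxbig : δ / (12 * (d : ℝ) ^ 3) ≤ ∑ i, x i) :
    (1 - δ / (12 * (d : ℝ) ^ 3 * ∑ i, x i)) • x ∈ stdCorner d ∧
    ‖(1 - δ / (12 * (d : ℝ) ^ 3 * ∑ i, x i)) • x - x‖ ≤ δ ∧
    δ ^ 2 / (144 * (d : ℝ) ^ 8)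
      < fkFun G k ((1 - δ / (12 * (d : ℝ) ^ 3 * ∑ i, x i)) • x) - fkFun G k x :=
  stmt_16_general G hδ0 (lt_of_lt_of_le hk hkd) hk hx hxbig
end
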